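/- For (x,t) ∈ ℝ² set y = exp(3^{−1/4} x) and define u(x,t) = [ 2 − 32(1 + 2√3)(y + 4y³) cos( (√3 t + π)/3 ) + 16 y² ( 8√3 + 5 − 4 sin( (4√3 t + π)/6 ) ) + 32 y⁴ ] / [ 4 ( 4√3 y sin(t/√3) − 4 y cos(t/√3) + 4 y² + 1 )² ]. Then u is smooth and satisfies the "good" Boussinesq equation u_tt − u_xx + (u²)_xx + u_xxxx = 0 on the open set of all (x,t) ∈ ℝ² for which 4√3 y sin(t/√3) − 4 y cos(t/√3) + 4 y² + 1 ≠ 0. -/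

import Mathlib

/-- Partial derivative in the first (spatial) variable. -/
noncomputable def pdx {E : Type*} [NormedAddCommGroup E] [NormedSpace ℝ E]
    (f : ℝ × ℝ → E) : ℝ × ℝ → E := fun p => fderiv ℝ f p (1, 0)

/-- Partial derivative in the second (time) variable. -/
noncomputable def pdt {E : Type*} [NormedAddCommGroup E] [NormedSpace ℝ E]
    (f : ℝ × ℝ → E) : ℝ × ℝ → E := fun p => fderiv ℝ f p (0, 1)

/-- y(x) = exp(3^{-1/4} x). -/
noncomputable def yfun (x : ℝ) : ℝ := Real.exp ((3 : ℝ) ^ (-(1 : ℝ) / 4) * x)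

open Set Filter Topology

/-- Directional derivative. -/
noncomputable def pdv (v : ℝ × ℝ) (f : ℝ × ℝ → ℝ) : ℝ × ℝ → ℝ := fun p => fderiv ℝ f p v

lemma pdv_congr {v : ℝ × ℝ} {f g : ℝ × ℝ → ℝ} {S : Set (ℝ × ℝ)} (hS : IsOpen S)
    (h : EqOn f g S) : EqOn (pdv v f) (pdv v g) S := by
  intro p hp
  have : f =ᶠ[𝓝 p] g := h.eventuallyEq_of_mem (hS.mem_nhds hp)
  simp only [pdv, this.fderiv_eq]

lemma pdv_smooth {v : ℝ × ℝ} {f : ℝ × ℝ → ℝ} {S : Set (ℝ × ℝ)} (hS : IsOpen S)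
    (h : ContDiffOn ℝ (⊤ : ℕ∞) f S) : ContDiffOn ℝ (⊤ : ℕ∞) (pdv v f) S := by
  have h1 : ContDiffOn ℝ (⊤ : ℕ∞) (fderiv ℝ f) S := h.fderiv_of_isOpen hS (by simp)
  exact h1.clm_apply contDiffOn_const

lemma pdv_add {v : ℝ × ℝ} {f g : ℝ × ℝ → ℝ} {S : Set (ℝ × ℝ)} (hS : IsOpen S)
    (hf : ContDiffOn ℝ (⊤ : ℕ∞) f S) (hg : ContDiffOn ℝ (⊤ : ℕ∞) g S) :
    EqOn (pdv v (fun p => f p + g p)) (fun p => pdv v f p + pdv v g p) S := by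
  intro p hp
  have h1 : DifferentiableAt ℝ f p :=
    (hf.contDiffAt (hS.mem_nhds hp)).differentiableAt (by simp)
  have h2 : DifferentiableAt ℝ g p :=
    (hg.contDiffAt (hS.mem_nhds hp)).differentiableAt (by simp)
  simp [pdv, fderiv_fun_add h1 h2]

lemma pdv2_add {v : ℝ × ℝ} {f g : ℝ × ℝ → ℝ} {S : Set (ℝ × ℝ)} (hS : IsOpen S)
    (hf : ContDiffOn ℝ (⊤ : ℕ∞) f S) (hg : ContDiffOn ℝ (⊤ : ℕ∞) g S) :
    EqOn (pdv v (pdv v (fun p => f p + g p))) (fun p => pdv v (pdv v f) p + pdv v (pdv v g) p) S :=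
  (pdv_congr hS (pdv_add hS hf hg)).trans (pdv_add hS (pdv_smooth hS hf) (pdv_smooth hS hg))

lemma pdv_quot (n : ℕ) {v : ℝ × ℝ} {N D N1 D1 : ℝ × ℝ → ℝ} (a c : ℝ)
    (hN : Differentiable ℝ N) (hD : Differentiable ℝ D)
    (hN1 : ∀ p, fderiv ℝ N p v = N1 p) (hD1 : ∀ p, fderiv ℝ D p v = D1 p) :
    EqOn (pdv v (fun p => c + a * (N p / D p ^ (n + 1))))
      (fun p => 0 + a * ((N1 p * D p - (n + 1) * N p * D1 p) / D p ^ (n + 2))) {p | D p ≠ 0} := by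
  intro p hp
  have hp' : D p ≠ 0 := hp
  have h := ((((hN p).hasFDerivAt.mul
    (((hasDerivAt_inv (pow_ne_zero (n+1) hp')).comp_hasFDerivAt p
      ((hD p).hasFDerivAt.pow (n+1))))).const_mul a).const_add c)
  have h2 : (fun p => c + a * (N p / D p ^ (n + 1))) =
     (fun x => c + a * (N * (fun y => y⁻¹) ∘ (fun x => D x ^ (n+1))) x) := by
    funext x; simp [div_eq_mul_inv]
  have h3 : HasFDerivAt (fun p => c + a * (N p / D p ^ (n + 1))) _ p := h2 ▸ h
  simp only [pdv, h3.fderiv]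
  simp [hN1, hD1]
  field_simp
  ring

lemma pdv2_quot {v : ℝ × ℝ} {N D N1 D1 N2 D2 : ℝ × ℝ → ℝ} (a c : ℝ)
    (hN : Differentiable ℝ N) (hD : Differentiable ℝ D)
    (hN' : Differentiable ℝ N1) (hD' : Differentiable ℝ D1)
    (hN1 : ∀ p, fderiv ℝ N p v = N1 p) (hD1 : ∀ p, fderiv ℝ D p v = D1 p)
    (hN2 : ∀ p, fderiv ℝ N1 p v = N2 p) (hD2 : ∀ p, fderiv ℝ D1 p v = D2 p) :
    EqOn (pdv v (pdv v (fun p => c + a * (N p / D p ^ 2))))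
      (fun p => a * ((N2 p * D p ^ 2 - 4 * N1 p * D1 p * D p - 2 * N p * D2 p * D p
        + 6 * N p * D1 p ^ 2) / D p ^ 4)) {p | D p ≠ 0} := by
  have hS : IsOpen {p | D p ≠ 0} := isOpen_ne_fun hD.continuous continuous_const
  have e1 := pdv_congr (v := v) hS (pdv_quot 1 a c hN hD hN1 hD1)
  have e2 := pdv_quot 2 (v := v) (N := fun p => N1 p * D p - ((1 : ℕ) + 1) * N p * D1 p) (D := D)
    (N1 := fun p => N2 p * D p - N1 p * D1 p - 2 * N p * D2 p) (D1 := D1) a 0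
    (by fun_prop) hD (by
      intro p
      have := (((hN' p).hasFDerivAt.mul (hD p).hasFDerivAt).sub
        (((hN p).hasFDerivAt.const_mul ((1:ℕ)+1 : ℝ)).mul (hD' p).hasFDerivAt)).fderiv
      have h3 := congrArg (fun L => L v) this
      refine Eq.trans h3 ?_
      simp [hN1, hN2, hD1, hD2]
      ring) hD1
  intro p hp
  rw [show pdv v (pdv v (fun p => c + a * (N p / D p ^ 2))) p = _ from e1 hp]
  refine (e2 hp).trans ?_
  push_cast
  ring

lemma fderiv_x {f : ℝ × ℝ → ℝ} {p : ℝ × ℝ} {d : ℝ} (hf : Differentiable ℝ f)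
    (h : HasDerivAt (fun x => f (x, p.2)) d p.1) : fderiv ℝ f p (1, 0) = d := by
  have h1 : HasDerivAt (fun x : ℝ => (x, p.2)) ((1 : ℝ), (0 : ℝ)) p.1 :=
    (hasDerivAt_id _).prodMk (hasDerivAt_const _ _)
  exact ((hf p).hasFDerivAt.comp_hasDerivAt p.1 h1).unique h

lemma fderiv_t {f : ℝ × ℝ → ℝ} {p : ℝ × ℝ} {d : ℝ} (hf : Differentiable ℝ f)
    (h : HasDerivAt (fun t => f (p.1, t)) d p.2) : fderiv ℝ f p (0, 1) = d := by
  have h1 : HasDerivAt (fun t : ℝ => (p.1, t)) ((0 : ℝ), (1 : ℝ)) p.2 :=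
    (hasDerivAt_const _ _).prodMk (hasDerivAt_id _)
  exact ((hf p).hasFDerivAt.comp_hasDerivAt p.2 h1).unique h

/-- The abstract computation: `y` is exponential in `x`, `A` is oscillating in `t`. -/
lemma core (y A B : ℝ → ℝ) (k r : ℝ) (hk : k ^ 2 = r / 3) (hr : r ^ 2 = 3)
    (hy : ∀ x, HasDerivAt y (k * y x) x) (hA : ∀ t, HasDerivAt A (B t) t)
    (hB : ∀ t, HasDerivAt B (-A t / 3) t) (hAB : ∀ t, 3 * B t ^ 2 = 64 - A t ^ 2)
    (hys : ContDiff ℝ (⊤ : ℕ∞) y) (hAs : ContDiff ℝ (⊤ : ℕ∞) A)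
    (u : ℝ × ℝ → ℝ)
    (hu : ∀ p : ℝ × ℝ, 1 + A p.2 * y p.1 + 4 * y p.1 ^ 2 ≠ 0 →
      u p = 1 / 2 + 2 * r * ((A p.2 * (y p.1 + 4 * y p.1 ^ 3) + 16 * y p.1 ^ 2) /
        (1 + A p.2 * y p.1 + 4 * y p.1 ^ 2) ^ 2)) :
    ContDiffOn ℝ (⊤ : ℕ∞) u {p | 1 + A p.2 * y p.1 + 4 * y p.1 ^ 2 ≠ 0} ∧
    ∀ p : ℝ × ℝ, 1 + A p.2 * y p.1 + 4 * y p.1 ^ 2 ≠ 0 →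
      pdv (0, 1) (pdv (0, 1) u) p - pdv (1, 0) (pdv (1, 0) u) p
       + pdv (1, 0) (pdv (1, 0) (fun p' => u p' ^ 2)) p
        + pdv (1, 0) (pdv (1, 0) (pdv (1, 0) (pdv (1, 0) u))) p = 0 := by
  have hyd : Differentiable ℝ y := fun x => (hy x).differentiableAt
  have hAd : Differentiable ℝ A := fun x => (hA x).differentiableAt
  have hBd : Differentiable ℝ B := fun x => (hB x).differentiableAt
  set D : ℝ × ℝ → ℝ := fun p => 1 + A p.2 * y p.1 + 4 * y p.1 ^ 2 with hDdef
  set P : ℝ × ℝ → ℝ := fun p => A p.2 * (y p.1 + 4 * y p.1 ^ 3) + 16 * y p.1 ^ 2 with hPdef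
  set V : ℝ × ℝ → ℝ := fun p => 2 * A p.2 * (y p.1 + 4 * y p.1 ^ 3) + 128 * y p.1 ^ 2 with hVdef
  have hDs : ContDiff ℝ (⊤ : ℕ∞) D := by fun_prop
  have hPs : ContDiff ℝ (⊤ : ℕ∞) P := by fun_prop
  have hVs : ContDiff ℝ (⊤ : ℕ∞) V := by fun_prop
  have hDd : Differentiable ℝ D := by fun_prop
  have hPd : Differentiable ℝ P := by fun_prop
  have hVd : Differentiable ℝ V := by fun_prop
  have hS : IsOpen {p | D p ≠ 0} := isOpen_ne_fun hDd.continuous continuous_const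
  have huS : EqOn u (fun p => 1 / 2 + 2 * r * (P p / D p ^ 2)) {p | D p ≠ 0} := fun p hp => hu p hp
  have hus : ContDiffOn ℝ (⊤ : ℕ∞) u {p | D p ≠ 0} := by
    refine ContDiffOn.congr ?_ huS
    exact contDiffOn_const.add (contDiffOn_const.mul
      (hPs.contDiffOn.div (hDs.contDiffOn.pow 2) (fun p hp => pow_ne_zero 2 hp)))
  have hws : ContDiffOn ℝ (⊤ : ℕ∞) (fun p => -1 / 4 + 1 * (V p / D p ^ 2)) {p | D p ≠ 0} := by
    exact contDiffOn_const.add (contDiffOn_const.mul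
      (hVs.contDiffOn.div (hDs.contDiffOn.pow 2) (fun p hp => pow_ne_zero 2 hp)))
  refine ⟨hus, ?_⟩
  -- general x-derivative rule
  have hX : ∀ (a b c e : ℝ) (p : ℝ × ℝ),
      fderiv ℝ (fun p : ℝ × ℝ => e + a * (A p.2 * y p.1) + b * y p.1 ^ 2 + c * (A p.2 * y p.1 ^ 3)) p (1, 0)
       = 0 + (a * k) * (A p.2 * y p.1) + (2 * k * b) * y p.1 ^ 2 + (3 * k * c) * (A p.2 * y p.1 ^ 3) := by
    intro a b c e p
    refine fderiv_x (by fun_prop) ?_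
    have := ((((hy p.1).const_mul (A p.2)).const_mul a).const_add e).add
      (((hy p.1).pow 2).const_mul b) |>.add ((((hy p.1).pow 3).const_mul (A p.2)).const_mul c)
    refine HasDerivAt.congr_deriv this ?_
    push_cast; ring
  have hT : ∀ (p : ℝ × ℝ) (F G : ℝ → ℝ) (z w : ℝ → ℝ), Differentiable ℝ z →
      Differentiable ℝ w → (∀ t, HasDerivAt F (G t) t) →
      fderiv ℝ (fun p : ℝ × ℝ => F p.2 * z p.1 + w p.1) p (0, 1) = G p.2 * z p.1 + 0 := by
    intro p F G z w hz hw hF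
    have hFd : Differentiable ℝ F := fun x => (hF x).differentiableAt
    refine fderiv_t (by fun_prop) ?_
    rw [add_zero]
    exact ((hF p.2).mul_const (z p.1)).add_const (w p.1)
  -- normal forms
  have hD' : D = fun p : ℝ × ℝ =>
      1 + 1 * (A p.2 * y p.1) + 4 * y p.1 ^ 2 + 0 * (A p.2 * y p.1 ^ 3) := by
    funext p; simp only [hDdef]; ring
  have hP' : P = fun p : ℝ × ℝ =>
      0 + 1 * (A p.2 * y p.1) + 16 * y p.1 ^ 2 + 4 * (A p.2 * y p.1 ^ 3) := by
    funext p; simp only [hPdef]; ring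
  have hV' : V = fun p : ℝ × ℝ =>
      0 + 2 * (A p.2 * y p.1) + 128 * y p.1 ^ 2 + 8 * (A p.2 * y p.1 ^ 3) := by
    funext p; simp only [hVdef]; ring
  have hDt : D = fun p : ℝ × ℝ => A p.2 * y p.1 + (1 + 4 * y p.1 ^ 2) := by
    funext p; simp only [hDdef]; ring
  have hDx1 := fun p => (congrArg (fun f => fderiv ℝ f p (1, 0)) hD').trans (hX 1 4 0 1 p)
  have hPx1 := fun p => (congrArg (fun f => fderiv ℝ f p (1, 0)) hP').trans (hX 1 16 4 0 p)
  have hVx1 := fun p => (congrArg (fun f => fderiv ℝ f p (1, 0)) hV').trans (hX 2 128 8 0 p)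
  have hDt1 := fun p => (congrArg (fun f => fderiv ℝ f p (0, 1)) hDt).trans
    (hT p A B y (fun x => 1 + 4 * y x ^ 2) hyd (by fun_prop) hA)
  have hPt1 := fun p => hT p A B (fun x => y x + 4 * y x ^ 3) (fun x => 16 * y x ^ 2)
    (by fun_prop) (by fun_prop) hA
  have qP := pdv2_quot (v := (1, 0)) (2 * r) (1 / 2) hPd hDd (by fun_prop) (by fun_prop)
    hPx1 hDx1 (hX _ _ _ _) (hX _ _ _ _)
  have qV := pdv2_quot (v := (1, 0)) 1 (-1 / 4) hVd hDd (by fun_prop) (by fun_prop)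
    hVx1 hDx1 (hX _ _ _ _) (hX _ _ _ _)
  have qT := pdv2_quot (v := (0, 1)) (2 * r) (1 / 2) hPd hDd (by fun_prop) (by fun_prop)
    hPt1 hDt1 (fun p => hT p B (fun t => -A t / 3) (fun x => y x + 4 * y x ^ 3) (fun _ => 0)
      (by fun_prop) (by fun_prop) hB)
    (fun p => hT p B (fun t => -A t / 3) y (fun _ => 0) hyd (by fun_prop) hB)
  have uxx := (pdv_congr (v := (1, 0)) hS (pdv_congr (v := (1, 0)) hS huS)).trans qP
  have utt := (pdv_congr (v := (0, 1)) hS (pdv_congr (v := (0, 1)) hS huS)).trans qT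
  have hu2s : ContDiffOn ℝ (⊤ : ℕ∞) (fun p => u p ^ 2) {p | D p ≠ 0} := hus.pow 2
  have huxxs := pdv_smooth (v := (1, 0)) hS (pdv_smooth (v := (1, 0)) hS hus)
  have key : EqOn (fun p => u p ^ 2 + pdv (1, 0) (pdv (1, 0) u) p)
      (fun p => (-1 / 4 + 1 * (V p / D p ^ 2)) + u p) {p | D p ≠ 0} := by
    intro p hp
    have hp' : D p ≠ 0 := hp
    have h1 := uxx hp
    have h2 := huS hp
    simp only at h1 h2 ⊢
    rw [h1, h2]
    simp only [hPdef, hVdef]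
    have hd : D p = 1 + A p.2 * y p.1 + 4 * y p.1 ^ 2 := rfl
    clear_value D
    generalize D p = d at *
    field_simp
    subst hd
    generalize A p.2 = a
    generalize y p.1 = z
    linear_combination (32 * r * ((1 * (a * z) + 64 * z ^ 2 + 36 * (a * z ^ 3)) * (1 + a * z + 4 * z ^ 2) ^ 2
        - 4 * (1 * (a * z) + 32 * z ^ 2 + 12 * (a * z ^ 3)) * (a * z + 8 * z ^ 2) * (1 + a * z + 4 * z ^ 2)
        - 2 * (1 * (a * z) + 16 * z ^ 2 + 4 * (a * z ^ 3)) * (a * z + 16 * z ^ 2) * (1 + a * z + 4 * z ^ 2)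
        + 6 * (1 * (a * z) + 16 * z ^ 2 + 4 * (a * z ^ 3)) * (a * z + 8 * z ^ 2) ^ 2)) * hk
      + (64 * (a * (z + 4 * z ^ 3) + 16 * z ^ 2) ^ 2 + 32 / 3 * ((1 * (a * z) + 64 * z ^ 2 + 36 * (a * z ^ 3)) * (1 + a * z + 4 * z ^ 2) ^ 2
        - 4 * (1 * (a * z) + 32 * z ^ 2 + 12 * (a * z ^ 3)) * (a * z + 8 * z ^ 2) * (1 + a * z + 4 * z ^ 2)
        - 2 * (1 * (a * z) + 16 * z ^ 2 + 4 * (a * z ^ 3)) * (a * z + 16 * z ^ 2) * (1 + a * z + 4 * z ^ 2)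
        + 6 * (1 * (a * z) + 16 * z ^ 2 + 4 * (a * z ^ 3)) * (a * z + 8 * z ^ 2) ^ 2)) * hr
  have e1 := pdv2_add (v := (1, 0)) hS hu2s huxxs
  have e2 := pdv_congr (v := (1, 0)) hS (pdv_congr (v := (1, 0)) hS key)
  have e3 := pdv2_add (v := (1, 0)) hS hws hus
  intro p hp
  have h1 := e1 hp
  have h2 := e2 hp
  have h3 := e3 hp
  have h4 := utt hp
  have h5 := qV hp
  simp only at h1 h2 h3 h4 h5
  have main : pdv (0, 1) (pdv (0, 1) u) p +
      pdv (1, 0) (pdv (1, 0) (fun p => -1 / 4 + 1 * (V p / D p ^ 2))) p = 0 := by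
    rw [h4, h5]
    simp only [hPdef, hVdef]
    have hb := hAB p.2
    have hp' : D p ≠ 0 := hp
    have hd : D p = 1 + A p.2 * y p.1 + 4 * y p.1 ^ 2 := rfl
    clear_value D
    generalize D p = d at *
    field_simp
    subst hd
    generalize A p.2 = a at *
    generalize B p.2 = b at *
    generalize y p.1 = z at *
    linear_combination (3 * ((2 * (a * z) + 512 * z ^ 2 + 72 * (a * z ^ 3)) * (1 + a * z + 4 * z ^ 2) ^ 2
        - 4 * (2 * (a * z) + 256 * z ^ 2 + 24 * (a * z ^ 3)) * (a * z + 8 * z ^ 2) * (1 + a * z + 4 * z ^ 2)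
        - 2 * (2 * (a * z) + 128 * z ^ 2 + 8 * (a * z ^ 3)) * (a * z + 16 * z ^ 2) * (1 + a * z + 4 * z ^ 2)
        + 6 * (2 * (a * z) + 128 * z ^ 2 + 8 * (a * z ^ 3)) * (a * z + 8 * z ^ 2) ^ 2)) * hk
      + (2 * r * ((1 + a * z + 4 * z ^ 2) * (-4 * z ^ 2 * (1 + 4 * z ^ 2)) + 6 * z ^ 2 * (a * (z + 4 * z ^ 3) + 16 * z ^ 2))) * hb
  linarith [h1, h2, h3, main]

/-- The (singular) breather solution of the "good" Boussinesq equation of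
Example 2: with `y = exp(3^{-1/4}x)`,
`u = [2 - 32(1+2√3)(y+4y³)cos((√3t+π)/3) + 16y²(8√3+5-4sin((4√3t+π)/6)) + 32y⁴] /
  [4(4√3 y sin(t/√3) - 4y cos(t/√3) + 4y² + 1)²]`
is smooth and solves `u_tt - u_xx + (u²)_xx + u_xxxx = 0` wherever
`4√3 y sin(t/√3) - 4y cos(t/√3) + 4y² + 1 ≠ 0`. -/
theorem breather_boussinesq
    (u : ℝ × ℝ → ℝ)
    (hu : u = fun p =>
      (2 - 32 * (1 + 2 * Real.sqrt 3) * (yfun p.1 + 4 * yfun p.1 ^ 3)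
            * Real.cos ((Real.sqrt 3 * p.2 + Real.pi) / 3)
        + 16 * yfun p.1 ^ 2
            * (8 * Real.sqrt 3 + 5 - 4 * Real.sin ((4 * Real.sqrt 3 * p.2 + Real.pi) / 6))
        + 32 * yfun p.1 ^ 4)
      / (4 * (4 * Real.sqrt 3 * yfun p.1 * Real.sin (p.2 / Real.sqrt 3)
            - 4 * yfun p.1 * Real.cos (p.2 / Real.sqrt 3) + 4 * yfun p.1 ^ 2 + 1) ^ 2))
    (S : Set (ℝ × ℝ))
    (hS : S = {p : ℝ × ℝ |
      4 * Real.sqrt 3 * yfun p.1 * Real.sin (p.2 / Real.sqrt 3)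
        - 4 * yfun p.1 * Real.cos (p.2 / Real.sqrt 3) + 4 * yfun p.1 ^ 2 + 1 ≠ 0}) :
    ContDiffOn ℝ (⊤ : ℕ∞) u S ∧
    ∀ p ∈ S,
      pdt (pdt u) p - pdx (pdx u) p + pdx (pdx (fun p' => u p' ^ 2)) p
        + pdx (pdx (pdx (pdx u))) p = 0 := by
  have h30 : (0 : ℝ) ≤ 3 := by norm_num
  set r := Real.sqrt 3 with hrdef
  have hr : r ^ 2 = 3 := Real.sq_sqrt h30
  have hr0 : r ≠ 0 := by
    intro h; rw [h] at hr; norm_num at hr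
  set k : ℝ := (3 : ℝ) ^ (-(1 : ℝ) / 4) with hkdef
  have hk : k ^ 2 = r / 3 := by
    have h1 : k ^ 2 = (3 : ℝ) ^ (-(1 : ℝ) / 2) := by
      rw [hkdef, ← Real.rpow_natCast, ← Real.rpow_mul h30]; norm_num
    have h2 : r * k ^ 2 = 1 := by
      rw [h1, hrdef, Real.sqrt_eq_rpow, ← Real.rpow_add (by norm_num)]; norm_num
    linear_combination (r / 3) * h2 - (k ^ 2 / 3) * hr
  have hy : ∀ x, HasDerivAt yfun (k * yfun x) x := by
    intro x
    have := ((hasDerivAt_id x).const_mul k).exp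
    refine HasDerivAt.congr_deriv this ?_
    simp [yfun, hkdef]; ring
  have hys : ContDiff ℝ (⊤ : ℕ∞) yfun := by unfold yfun; fun_prop
  have hth : ∀ t : ℝ, HasDerivAt (fun t : ℝ => t / r) (1 / r) t := fun t =>
    (hasDerivAt_id t).div_const r
  have hsc : ∀ t : ℝ, Real.sin (t / r) ^ 2 + Real.cos (t / r) ^ 2 = 1 := fun t =>
    Real.sin_sq_add_cos_sq _
  obtain ⟨c1, c2⟩ := core yfun (fun t => 4 * r * Real.sin (t / r) - 4 * Real.cos (t / r))
    (fun t => 4 * Real.cos (t / r) + 4 * r / 3 * Real.sin (t / r)) k r hk hr hy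
    (by
      intro t
      refine HasDerivAt.congr_deriv (((hth t).sin.const_mul (4 * r)).sub
        ((hth t).cos.const_mul 4)) ?_
      field_simp
      linear_combination (-1 * Real.sin (t / r)) * hr)
    (by
      intro t
      refine HasDerivAt.congr_deriv (((hth t).cos.const_mul 4).add
        ((hth t).sin.const_mul (4 * r / 3))) ?_
      field_simp
      linear_combination (Real.sin (t / r)) * hr)
    (by
      intro t
      linear_combination 64 * hsc t + (16 / 3 * Real.sin (t / r) ^ 2 + 16 * Real.sin (t / r) ^ 2) * hr)
    hys (by fun_prop) u
    (by
      intro p hp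
      have hc : Real.cos ((r * p.2 + Real.pi) / 3) =
          (Real.cos (p.2 / r) - r * Real.sin (p.2 / r)) / 2 := by
        have : (r * p.2 + Real.pi) / 3 = p.2 / r + Real.pi / 3 := by
          field_simp
          linear_combination p.2 * hr
        rw [this, Real.cos_add, Real.cos_pi_div_three, Real.sin_pi_div_three]; ring
      have hs : Real.sin ((4 * r * p.2 + Real.pi) / 6) =
          r * Real.sin (p.2 / r) * Real.cos (p.2 / r) +
            (1 - 2 * Real.sin (p.2 / r) ^ 2) / 2 := by
        have : (4 * r * p.2 + Real.pi) / 6 = 2 * (p.2 / r) + Real.pi / 6 := by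
          field_simp
          linear_combination 4 * p.2 * hr
        rw [this, Real.sin_add, Real.cos_pi_div_six, Real.sin_pi_div_six, Real.sin_two_mul,
          Real.cos_two_mul, Real.cos_sq']; ring
      have hq := hsc p.2
      rw [hu]
      simp only [hc, hs]
      have hd : 4 * r * yfun p.1 * Real.sin (p.2 / r) - 4 * yfun p.1 * Real.cos (p.2 / r)
          + 4 * yfun p.1 ^ 2 + 1 = 1 + (4 * r * Real.sin (p.2 / r) - 4 * Real.cos (p.2 / r)) *
            yfun p.1 + 4 * yfun p.1 ^ 2 := by ring
      rw [hd]
      generalize hdd : 1 + (4 * r * Real.sin (p.2 / r) - 4 * Real.cos (p.2 / r)) *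
            yfun p.1 + 4 * yfun p.1 ^ 2 = d at *
      field_simp
      subst hdd
      generalize Real.sin (p.2 / r) = s at *
      generalize Real.cos (p.2 / r) = c at *
      generalize yfun p.1 = z at *
      linear_combination (-64 * z ^ 2) * hq + (-64 * z ^ 2 * s ^ 2) * hr)
  have hSe : S = {p : ℝ × ℝ | 1 + (4 * r * Real.sin (p.2 / r) - 4 * Real.cos (p.2 / r)) * yfun p.1
      + 4 * yfun p.1 ^ 2 ≠ 0} := by
    rw [hS]; ext p
    simp only [Set.mem_ofPred_eq]
    rw [show 4 * r * yfun p.1 * Real.sin (p.2 / r) - 4 * yfun p.1 * Real.cos (p.2 / r)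
          + 4 * yfun p.1 ^ 2 + 1 = 1 + (4 * r * Real.sin (p.2 / r) - 4 * Real.cos (p.2 / r)) *
            yfun p.1 + 4 * yfun p.1 ^ 2 by ring]
  rw [hSe]
  exact ⟨c1, fun p hp => c2 p hp⟩
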